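/- Assume β l i j ≥ 0 for all l, i, j, α l k > 0 for all l, k, and σ² > 0. Then for every pilot configuration φ, the value G φ is the greatest element (IsGreatest) of the set { f φ μ : μ ∈ (Fin L → Fin K → Fin τ → ℂ) }; in particular the maximum over μ is attained and equals G φ, so the weighted-MSE pilot design problem of maximizing G over any feasible set of pilots is equivalent to jointly maximizing f over that feasible set and all μ. -/

import Mathlib

open Matrix ComplexConjugate
open scoped ComplexOrder

/-- The quadratic form of a Hermitian matrix, read backwards. -/
lemma Matrix.IsHermitian.re_star_dotProduct_mulVec_comm {n : Type*} [Fintype n]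
    {A : Matrix n n ℂ} (hA : A.IsHermitian) (x y : n → ℂ) :
    (star x ⬝ᵥ (A *ᵥ y)).re = (star y ⬝ᵥ (A *ᵥ x)).re := by
  have h : star (star x ⬝ᵥ (A *ᵥ y)) = star y ⬝ᵥ (A *ᵥ x) := by
    rw [star_dotProduct, star_star, star_mulVec, hA.eq, ← dotProduct_mulVec]
  rw [← h]
  exact (Complex.conj_re _).symm

/-- Completing the square for a positive definite quadratic form with a linear term. -/
lemma Matrix.PosDef.two_mul_re_dotProduct_sub_eq {n : Type*} [Fintype n] [DecidableEq n]
    {A : Matrix n n ℂ} (hA : A.PosDef) (b : ℝ) (v x : n → ℂ) :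
    2 * b * (star x ⬝ᵥ v).re - (star x ⬝ᵥ (A *ᵥ x)).re =
      b ^ 2 * (star v ⬝ᵥ (A⁻¹ *ᵥ v)).re -
        (star (x - (b : ℂ) • (A⁻¹ *ᵥ v)) ⬝ᵥ (A *ᵥ (x - (b : ℂ) • (A⁻¹ *ᵥ v)))).re := by
  obtain ⟨w, hw⟩ : ∃ w, A⁻¹ *ᵥ v = w := ⟨_, rfl⟩
  have hv : A *ᵥ w = v := by
    rw [← hw, mulVec_mulVec, mul_nonsing_inv _ ((isUnit_iff_isUnit_det A).mp hA.isUnit),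
      one_mulVec]
  have hxw := hA.isHermitian.re_star_dotProduct_mulVec_comm w x
  have hwv : (star w ⬝ᵥ v).re = (star v ⬝ᵥ w).re := by
    have h : star (star w ⬝ᵥ v) = star v ⬝ᵥ w := by rw [star_dotProduct, star_star]
    rw [← h]
    exact (Complex.conj_re _).symm
  rw [hv] at hxw
  have hb : star (b : ℂ) = b := Complex.conj_ofReal b
  rw [hw]
  simp only [mulVec_sub, mulVec_smul, hv, star_sub, star_smul, sub_dotProduct, dotProduct_sub,
    smul_dotProduct, dotProduct_smul, smul_eq_mul, Complex.sub_re, hb,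
    Complex.re_ofReal_mul, hxw, hwv]
  ring

/-- A positive multiple of the identity plus a nonnegative combination of rank-one Hermitian
matrices is positive definite. -/
lemma Matrix.posDef_smul_one_add_sum_smul_vecMulVec {n ι : Type*} [Fintype n] [DecidableEq n]
    [Fintype ι] {c : ℝ} (hc : 0 < c) {b : ι → ℝ} (hb : ∀ i, 0 ≤ b i) (v : ι → n → ℂ) :
    ((c : ℂ) • (1 : Matrix n n ℂ) + ∑ i, (b i : ℂ) • vecMulVec (v i) (star (v i))).PosDef := by
  refine (PosDef.one.smul (Complex.zero_lt_real.mpr hc)).add_posSemidef ?_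
  exact posSemidef_sum _ fun i _ =>
    (posSemidef_vecMulVec_self_star (v i)).smul (Complex.zero_le_real.mpr (hb i))

/-- Multicell pilot design: assuming nonnegative fading `β`, positive weights `α`
and positive noise `σ²`, for every pilot configuration `φ` the weighted-MSE
objective `G φ` is the greatest element of the set `{ f φ μ : μ }` of values of
the quadratic-transform objective; hence maximizing `G` over any feasible pilot
set is equivalent to jointly maximizing `f` over that set and all `μ`. -/
theorem pilot_quadratic_transform_isGreatest (L K τ : ℕ)
    (hL : 0 < L) (hK : 0 < K) (hτ : 0 < τ)
    (σ2 : ℝ) (hσ2 : 0 < σ2)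
    (β : Fin L → Fin L → Fin K → ℝ) (hβ : ∀ l i j, 0 ≤ β l i j)
    (α : Fin L → Fin K → ℝ) (hα : ∀ l k, 0 < α l k)
    (D : Fin L → (Fin L → Fin K → (Fin τ → ℂ)) → Matrix (Fin τ) (Fin τ) ℂ)
    (hD : ∀ l φ s t, D l φ s t =
      (σ2 : ℂ) * (if s = t then 1 else 0) +
        ∑ i : Fin L, ∑ j : Fin K, (β l i j : ℂ) * (φ i j s) * conj (φ i j t))
    (G : (Fin L → Fin K → (Fin τ → ℂ)) → ℝ)
    (hG : ∀ φ, G φ = ∑ l : Fin L, ∑ k : Fin K,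
      α l k * (β l l k) ^ 2 * (star (φ l k) ⬝ᵥ ((D l φ)⁻¹ *ᵥ (φ l k))).re)
    (f : (Fin L → Fin K → (Fin τ → ℂ)) → (Fin L → Fin K → (Fin τ → ℂ)) → ℝ)
    (hf : ∀ φ μ, f φ μ = ∑ l : Fin L, ∑ k : Fin K,
      α l k * (2 * (β l l k) * (star (μ l k) ⬝ᵥ (φ l k)).re -
        (star (μ l k) ⬝ᵥ ((D l φ) *ᵥ (μ l k))).re))
    (φ : Fin L → Fin K → (Fin τ → ℂ)) :
    IsGreatest {y : ℝ | ∃ μ : Fin L → Fin K → (Fin τ → ℂ), y = f φ μ} (G φ) := by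
  have hpos : ∀ l, (D l φ).PosDef := fun l => by
    have h := posDef_smul_one_add_sum_smul_vecMulVec (n := Fin τ) hσ2
      (b := fun p : Fin L × Fin K => β l p.1 p.2) (fun p => hβ l p.1 p.2) (fun p => φ p.1 p.2)
    convert h using 1
    ext s t
    simp [hD, Matrix.sum_apply, Matrix.one_apply, vecMulVec_apply, Fintype.sum_prod_type,
      mul_assoc]
  refine ⟨⟨fun l k => (β l l k : ℂ) • ((D l φ)⁻¹ *ᵥ φ l k), ?_⟩, ?_⟩
  · rw [hG, hf]
    refine Finset.sum_congr rfl fun l _ => Finset.sum_congr rfl fun k _ => ?_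
    rw [(hpos l).two_mul_re_dotProduct_sub_eq, sub_self]
    simp [mul_assoc]
  · rintro _ ⟨μ, rfl⟩
    rw [hG, hf]
    refine Finset.sum_le_sum fun l _ => Finset.sum_le_sum fun k _ => ?_
    rw [(hpos l).two_mul_re_dotProduct_sub_eq, mul_assoc]
    refine mul_le_mul_of_nonneg_left (sub_le_self _ ?_) (hα l k).le
    exact (Complex.le_def.mp ((hpos l).posSemidef.dotProduct_mulVec_nonneg _)).1
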